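/- Let α > 1, let Ω ⊆ ℝⁿ be open, and let ψ : ℝⁿ → ℝ be twice continuously differentiable on Ω with ψ < 0 and Δψ ≥ 0 on Ω. Then for every smooth φ : ℝⁿ → ℝ with compact support contained in Ω, one has ∫_Ω φ² Δψ ≤ (4/(α−1)) ∫_Ω (1 + |ψ|)^α |∇φ|², where the integrals are with respect to Lebesgue measure. -/

import Mathlib

open MeasureTheory Metric
open scoped Real Topology ENNReal

noncomputable section

/-- The Euclidean Laplacian `Δψ(x) = Σᵢ ∂²ψ/∂xᵢ²(x)`. -/
def lap (n : ℕ) (ψ : EuclideanSpace ℝ (Fin n) → ℝ) (x : EuclideanSpace ℝ (Fin n)) : ℝ :=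
  ∑ i : Fin n, fderiv ℝ (fun y => fderiv ℝ ψ y (EuclideanSpace.single i 1)) x
    (EuclideanSpace.single i 1)

lemma aux_grad (n : ℕ) (φ : EuclideanSpace ℝ (Fin n) → ℝ) (x : EuclideanSpace ℝ (Fin n)) :
    ‖gradient φ x‖ ^ 2 = ∑ i : Fin n, (fderiv ℝ φ x (EuclideanSpace.single i 1)) ^ 2 := by
  rw [EuclideanSpace.norm_sq_eq]
  refine Finset.sum_congr rfl fun i _ => ?_
  have h : fderiv ℝ φ x (EuclideanSpace.single i 1) = gradient φ x i := by
    have h1 : fderiv ℝ φ x (EuclideanSpace.single i 1)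
        = inner ℝ (gradient φ x) (EuclideanSpace.single i 1) := by
      unfold gradient
      rw [InnerProductSpace.toDual_symm_apply]
    rw [h1]
    rw [EuclideanSpace.inner_single_right]; simp
  rw [h, Real.norm_eq_abs, sq_abs]

lemma aux_alg (β a b p g w : ℝ) (hβ : 0 < β) (hw : 0 < w) (hg0 : 0 ≤ g) (hg : g ≤ 2) :
    0 ≤ 2 * p * a * g * b + p ^ 2 * (β * w⁻¹ * b) * b + 4 / β * (w * a ^ 2) := by
  have h1 : 2 * p * a * g * b + p ^ 2 * (β * w⁻¹ * b) * b + 4 / β * (w * a ^ 2)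
      = (β * p * b + g * w * a) ^ 2 / (β * w) + (4 - g ^ 2) * (w * a ^ 2) / β := by
    field_simp
    ring
  rw [h1]
  have : 0 ≤ 4 - g ^ 2 := by nlinarith
  positivity

/-- the test field -/
def auxV {n : ℕ} (α : ℝ) (ψ φ : EuclideanSpace ℝ (Fin n) → ℝ) (e : EuclideanSpace ℝ (Fin n))
    (x : EuclideanSpace ℝ (Fin n)) : ℝ :=
  φ x ^ 2 * (1 + (1 - ψ x) ^ (-(α - 1))) * fderiv ℝ ψ x e

lemma auxV_support {n : ℕ} (α : ℝ) (ψ φ : EuclideanSpace ℝ (Fin n) → ℝ)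
    (e : EuclideanSpace ℝ (Fin n)) : tsupport (auxV α ψ φ e) ⊆ tsupport φ := by
  refine closure_mono fun x hx => ?_
  intro h
  exact hx (by simp [auxV, h])

lemma auxV_contDiff {n : ℕ} (α : ℝ)
    (Ω : Set (EuclideanSpace ℝ (Fin n))) (hΩ : IsOpen Ω)
    (ψ φ : EuclideanSpace ℝ (Fin n) → ℝ)
    (hψ : ContDiffOn ℝ 2 ψ Ω)
    (hψneg : ∀ x ∈ Ω, ψ x < 0)
    (hφ : ContDiff ℝ (⊤ : ℕ∞) φ) (hφΩ : tsupport φ ⊆ Ω)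
    (e : EuclideanSpace ℝ (Fin n)) : ContDiff ℝ 1 (auxV α ψ φ e) := by
  refine contDiff_iff_contDiffAt.2 fun x => ?_
  by_cases hx : x ∈ tsupport (auxV α ψ φ e)
  swap
  · exact contDiffAt_const.congr_of_eventuallyEq (notMem_tsupport_iff_eventuallyEq.1 hx)
  have hxΩ := hφΩ (auxV_support α ψ φ e hx)
  have h1 : ContDiffAt ℝ 2 ψ x := hψ.contDiffAt (hΩ.mem_nhds hxΩ)
  have h2 : ContDiffAt ℝ 1 (fun y => fderiv ℝ ψ y e) x :=
    (h1.fderiv_right (m := 1) (by norm_num)).clm_apply contDiffAt_const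
  have h3 : ContDiffAt ℝ 1 φ x := hφ.contDiffAt.of_le (by exact_mod_cast le_top)
  have h4 : ContDiffAt ℝ 1 ψ x := h1.of_le (by norm_num)
  have h5 : ContDiffAt ℝ 1 (fun y => (1 - ψ y) ^ (-(α - 1))) x :=
    (contDiffAt_const.sub h4).rpow_const_of_ne (by linarith [hψneg x hxΩ])
  exact ((h3.pow 2).mul (contDiffAt_const.add h5)).mul h2

lemma auxV_deriv {n : ℕ} (α : ℝ)
    (Ω : Set (EuclideanSpace ℝ (Fin n))) (hΩ : IsOpen Ω)
    (ψ φ : EuclideanSpace ℝ (Fin n) → ℝ)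
    (hψ : ContDiffOn ℝ 2 ψ Ω)
    (hψneg : ∀ x ∈ Ω, ψ x < 0)
    (hφ : ContDiff ℝ (⊤ : ℕ∞) φ)
    (e : EuclideanSpace ℝ (Fin n)) (x : EuclideanSpace ℝ (Fin n)) (hxΩ : x ∈ Ω) :
    fderiv ℝ (auxV α ψ φ e) x e =
      φ x ^ 2 * (1 + (1 - ψ x) ^ (-(α - 1))) * fderiv ℝ (fun y => fderiv ℝ ψ y e) x e
      + (2 * φ x * fderiv ℝ φ x e * (1 + (1 - ψ x) ^ (-(α - 1))) * fderiv ℝ ψ x e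
      + φ x ^ 2 * ((α - 1) * ((1 - ψ x) ^ α)⁻¹ * fderiv ℝ ψ x e) * fderiv ℝ ψ x e) := by
  have h1 : ContDiffAt ℝ 2 ψ x := hψ.contDiffAt (hΩ.mem_nhds hxΩ)
  have h2 : HasFDerivAt (fun y => fderiv ℝ ψ y e) (fderiv ℝ (fun y => fderiv ℝ ψ y e) x) x :=
    (((h1.fderiv_right (m := 1) (by norm_num)).clm_apply contDiffAt_const).differentiableAt
      (by norm_num)).hasFDerivAt
  have h3 : HasFDerivAt φ (fderiv ℝ φ x) x :=
    (hφ.contDiffAt.differentiableAt (by simp)).hasFDerivAt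
  have h4 : HasFDerivAt ψ (fderiv ℝ ψ x) x := (h1.differentiableAt (by norm_num)).hasFDerivAt
  have hpos : 0 < 1 - ψ x := by linarith [hψneg x hxΩ]
  have h5 := ((h4.const_sub 1).rpow_const (p := -(α - 1)) (Or.inl hpos.ne'))
  have h6 := ((h3.pow 2).mul (h5.const_add 1)).mul h2
  have h7 : fderiv ℝ (auxV α ψ φ e) x = _ := h6.fderiv
  rw [h7]
  have h8 : (1 - ψ x) ^ (-(α - 1) - 1) = ((1 - ψ x) ^ α)⁻¹ := by
    rw [← Real.rpow_neg hpos.le]; congr 1; ring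
  rw [h8]
  simp only [Pi.mul_apply, ContinuousLinearMap.add_apply, ContinuousLinearMap.smul_apply,
    ContinuousLinearMap.neg_apply, smul_eq_mul, nsmul_eq_mul]
  push_cast
  ring

theorem stmt_8 (n : ℕ) (α : ℝ) (hα : 1 < α)
    (Ω : Set (EuclideanSpace ℝ (Fin n))) (hΩ : IsOpen Ω)
    (ψ φ : EuclideanSpace ℝ (Fin n) → ℝ)
    (hψ : ContDiffOn ℝ 2 ψ Ω)
    (hψneg : ∀ x ∈ Ω, ψ x < 0) (hψsub : ∀ x ∈ Ω, 0 ≤ lap n ψ x)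
    (hφ : ContDiff ℝ (⊤ : ℕ∞) φ) (hφs : HasCompactSupport φ) (hφΩ : tsupport φ ⊆ Ω) :
    (∫ x in Ω, φ x ^ 2 * lap n ψ x) ≤
      4 / (α - 1) * ∫ x in Ω, (1 + |ψ x|) ^ α * ‖gradient φ x‖ ^ 2 := by
  have hβ : 0 < α - 1 := by linarith
  let e : Fin n → EuclideanSpace ℝ (Fin n) := fun i => EuclideanSpace.single i 1
  let D : EuclideanSpace ℝ (Fin n) → ℝ := fun x => ∑ i, fderiv ℝ (auxV α ψ φ (e i)) x (e i)
  have hVc : ∀ i, ContDiff ℝ 1 (auxV α ψ φ (e i)) := fun i =>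
    auxV_contDiff α Ω hΩ ψ φ hψ hψneg hφ hφΩ (e i)
  have hVs : ∀ i, HasCompactSupport (auxV α ψ φ (e i)) := fun i =>
    hφs.of_isClosed_subset (isClosed_tsupport _) (auxV_support α ψ φ (e i))
  have hDi : ∀ i, Integrable (fun x => fderiv ℝ (auxV α ψ φ (e i)) x (e i)) := fun i =>
    (((hVc i).continuous_fderiv (by norm_num)).clm_apply
      continuous_const).integrable_of_hasCompactSupport ((hVs i).fderiv_apply ℝ (e i))
  have hD0 : ∀ i, ∫ x, fderiv ℝ (auxV α ψ φ (e i)) x (e i) = 0 := fun i => by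
    have := integral_mul_fderiv_eq_neg_fderiv_mul_of_integrable (𝕜 := ℝ)
      (μ := (volume : Measure (EuclideanSpace ℝ (Fin n))))
      (f := fun _ => (1 : ℝ)) (g := auxV α ψ φ (e i)) (v := e i)
      (by simp) (by simpa using hDi i)
      (by simpa using (hVc i).continuous.integrable_of_hasCompactSupport (hVs i))
      (fun x _ => by fun_prop) (fun x _ => (hVc i).differentiable (by norm_num) x)
    simpa using this
  have hDint : Integrable D := integrable_finsetSum _ fun i _ => hDi i
  have hDz : ∀ x, x ∉ Ω → D x = 0 := fun x hx => by
    refine Finset.sum_eq_zero fun i _ => ?_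
    have : x ∉ tsupport (fderiv ℝ (auxV α ψ φ (e i))) := fun h =>
      hx (hφΩ (auxV_support α ψ φ (e i) (tsupport_fderiv_subset ℝ h)))
    rw [image_eq_zero_of_notMem_tsupport this]; simp
  have hDI : ∫ x in Ω, D x = 0 := by
    rw [setIntegral_eq_integral_of_forall_compl_eq_zero hDz,
      integral_finsetSum _ fun i _ => hDi i]
    exact Finset.sum_eq_zero fun i _ => hD0 i
  have hgc : Continuous (fun x => ‖gradient φ x‖ ^ 2) := by
    simp_rw [aux_grad]
    have := hφ.continuous_fderiv (by simp)
    fun_prop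
  have hR : Integrable (fun x => (1 + |ψ x|) ^ α * ‖gradient φ x‖ ^ 2) := by
    have hs : Function.support (fun x => (1 + |ψ x|) ^ α * ‖gradient φ x‖ ^ 2) ⊆ tsupport φ := by
      intro x hx
      by_contra h
      apply hx
      have : fderiv ℝ φ x = 0 :=
        image_eq_zero_of_notMem_tsupport fun h' => h (tsupport_fderiv_subset ℝ h')
      simp [aux_grad, this]
    rw [← integrableOn_iff_integrable_of_support_subset hs]
    refine ContinuousOn.integrableOn_compact hφs ?_
    refine ContinuousOn.mul ?_ hgc.continuousOn
    refine ContinuousOn.rpow_const ?_ fun x _ => Or.inl (by positivity)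
    exact continuousOn_const.add (hψ.continuousOn.mono hφΩ).abs
  have key : ∀ x ∈ Ω, φ x ^ 2 * lap n ψ x ≤
      D x + 4 / (α - 1) * ((1 + |ψ x|) ^ α * ‖gradient φ x‖ ^ 2) := by
    intro x hx
    have hneg := hψneg x hx
    have hab : 1 + |ψ x| = 1 - ψ x := by rw [abs_of_neg hneg]; ring
    have hu : 1 ≤ 1 - ψ x := by linarith
    have hg0 : 0 ≤ (1 - ψ x) ^ (-(α - 1)) := by positivity
    have hg1 : (1 - ψ x) ^ (-(α - 1)) ≤ 1 :=
      Real.rpow_le_one_of_one_le_of_nonpos hu (by linarith)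
    have hw : 0 < (1 - ψ x) ^ α := by positivity
    have hle : φ x ^ 2 * lap n ψ x ≤
        φ x ^ 2 * (1 + (1 - ψ x) ^ (-(α - 1))) * lap n ψ x := by
      have := mul_nonneg (mul_nonneg (sq_nonneg (φ x)) hg0) (hψsub x hx)
      nlinarith
    refine hle.trans ?_
    rw [hab, aux_grad, lap, Finset.mul_sum, Finset.mul_sum, Finset.mul_sum,
      ← Finset.sum_add_distrib]
    refine Finset.sum_le_sum fun i _ => ?_
    rw [auxV_deriv α Ω hΩ ψ φ hψ hψneg hφ (e i) x hx]
    have := aux_alg (α - 1) (fderiv ℝ φ x (e i)) (fderiv ℝ ψ x (e i)) (φ x)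
      (1 + (1 - ψ x) ^ (-(α - 1))) ((1 - ψ x) ^ α) hβ hw (by linarith) (by linarith)
    simp only [e] at this ⊢
    linarith
  have hR' := (hR.const_mul (4 / (α - 1))).integrableOn (s := Ω)
  calc (∫ x in Ω, φ x ^ 2 * lap n ψ x)
      ≤ ∫ x in Ω, (D x + 4 / (α - 1) * ((1 + |ψ x|) ^ α * ‖gradient φ x‖ ^ 2)) := by
        refine integral_mono_of_nonneg ?_ (hDint.integrableOn.add hR') ?_
        · exact (ae_restrict_iff' hΩ.measurableSet).2 (Filter.Eventually.of_forall fun x hx =>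
            mul_nonneg (sq_nonneg _) (hψsub x hx))
        · exact (ae_restrict_iff' hΩ.measurableSet).2 (Filter.Eventually.of_forall key)
    _ = _ := by
        rw [integral_add hDint.integrableOn hR', hDI, zero_add, integral_const_mul]
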